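/- Let X be a metric space and let f, g be continuous self-maps of X. If the family {f, g∘f, g∘g} is topologically contractive, then the family {f, g} is topologically contractive. -/

import Mathlib

/-- A family `F` of self-maps of a metric space `X` is topologically contractive if for
every `ε > 0` there is `k` such that every composition of `k` maps from `F` has image of
diameter less than `ε`. -/
def TopContractive {X : Type*} [MetricSpace X] (F : Set (X → X)) : Prop :=
  ∀ ε > (0 : ℝ), ∃ k : ℕ, ∀ l : List (X → X), (∀ f ∈ l, f ∈ F) → l.length = k →
    Metric.diam (Set.range (l.foldr (· ∘ ·) id)) < ε

/-- Since `f`, `g ∘ f`, `g ∘ g` form a complete prefix code over the letters `f`, `g`, every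
composition of at least `2 * k` maps from `{f, g}` starts with `k` maps from
`{f, g ∘ f, g ∘ g}`. -/
theorem exists_range_foldr_subset_of_pair {X : Type*} (f g : X → X) (k : ℕ) (l : List (X → X))
    (hl : ∀ a ∈ l, a ∈ ({f, g} : Set (X → X))) (hk : 2 * k ≤ l.length) :
    ∃ m : List (X → X), (∀ a ∈ m, a ∈ ({f, g ∘ f, g ∘ g} : Set (X → X))) ∧ m.length = k ∧
      Set.range (l.foldr (· ∘ ·) id) ⊆ Set.range (m.foldr (· ∘ ·) id) := by
  induction k generalizing l with
  | zero => exact ⟨[], by simp, rfl, by simp⟩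
  | succ k ih =>
    match l, hl, hk with
    | [], _, hk => simp at hk
    | [_], _, hk => simp at hk; omega
    | a :: b :: t, hl, hk =>
      simp only [List.length_cons] at hk
      have hbt : ∀ c ∈ b :: t, c ∈ ({f, g} : Set (X → X)) :=
        fun c hc => hl c (List.mem_cons_of_mem a hc)
      rcases hl a List.mem_cons_self with rfl | rfl
      · obtain ⟨m, hm, rfl, hsub⟩ := ih (b :: t) hbt (by simp only [List.length_cons]; omega)
        refine ⟨a :: m, List.forall_mem_cons.2 ⟨by simp, hm⟩, rfl, ?_⟩
        simp only [List.foldr_cons, Set.range_comp a] at hsub ⊢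
        exact Set.image_mono hsub
      · obtain ⟨m, hm, rfl, hsub⟩ :=
          ih t (fun c hc => hbt c (List.mem_cons_of_mem b hc)) (by omega)
        refine ⟨(a ∘ b) :: m, List.forall_mem_cons.2 ⟨?_, hm⟩, rfl, ?_⟩
        · rcases hbt b List.mem_cons_self with rfl | rfl <;> simp
        · simp only [List.foldr_cons, ← Function.comp_assoc, Set.range_comp (a ∘ b)]
          exact Set.image_mono hsub

/-- If `{f, g ∘ f, g ∘ g}` is topologically contractive, then so is `{f, g}`. -/
theorem topContractive_pair_of_topContractive_triple
    {X : Type*} [MetricSpace X] (f g : X → X)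
    (hf : Continuous f) (hg : Continuous g)
    (h : TopContractive {f, g ∘ f, g ∘ g}) :
    TopContractive {f, g} := by
  intro ε hε
  by_cases hb : Bornology.IsBounded (Set.univ : Set X)
  · obtain ⟨k, hk⟩ := h ε hε
    refine ⟨2 * k, fun l hl hlen => ?_⟩
    obtain ⟨m, hm, hmk, hsub⟩ := exists_range_foldr_subset_of_pair f g k l hl hlen.ge
    exact (Metric.diam_mono hsub (hb.subset (Set.subset_univ _))).trans_lt (hk m hm hmk)
  · -- `Metric.diam` of an unbounded set is `0`, so the empty composition works.
    refine ⟨0, fun l _ hlen => ?_⟩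
    rw [List.length_eq_zero_iff.1 hlen, List.foldr_nil, Set.range_id,
      Metric.diam_eq_zero_of_unbounded hb]
    exact hε
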